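/- Let F'_y = (ı e_l + √2 ı e_0 - ı e_{-l} ⊂ e_1 ⊂ ⋯ ⊂ e_{l-1}), let B_{2l} = {g ∈ K : the matrix of g with respect to the ordered basis (e_1,…,e_l,e_0,e_{-l},…,e_{-1}) is upper triangular} (a Borel subgroup of K), let B_{2l-1} = {g ∈ SO(2l+1) : g e_0 = e_0, g(e_l - e_{-l}) = e_l - e_{-l}, and the matrix of g with respect to that ordered basis is upper triangular}, and let E_0 = (e_1 ⊂ ⋯ ⊂ e_l). Let W = {v ∈ ℂ^{2l+1} : β(v,e_0) = 0} = span(e_{±1},…,e_{±l}) and let X_W be the set of chains W_1 ⊂ ⋯ ⊂ W_l ⊂ W with dim W_i = i, β vanishing identically on W_l, and dim(W_l ∩ span(e_1,…,e_l)) ≡ l (mod 2). Then for all k, k' ∈ K one has B_{2l}·(k·F'_y) = B_{2l}·(k'·F'_y) if and only if B_{2l-1}·(k^{-1}·E_0) = B_{2l-1}·(k'^{-1}·E_0); consequently the assignment B_{2l}·(k·F'_y) ↦ B_{2l-1}·(k^{-1}·E_0) is a well-defined bijection from the set of B_{2l}-orbits on the K-orbit of F'_y onto the set of B_{2l-1}-orbits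 on X_W. -/

import Mathlib

open Module Submodule

noncomputable section

/-- `stdVec n m` is the `m`-th standard basis vector of `ℂ^n` (1-indexed); `0` out of range. -/
def stdVec (n m : ℕ) : Fin n → ℂ :=
  if h : 1 ≤ m ∧ m ≤ n then Pi.single (⟨m - 1, by omega⟩ : Fin n) 1 else 0

/-- `stdSub n k` is the subspace `U_k = span(e_1, …, e_k)` of `ℂ^n`. -/
def stdSub (n k : ℕ) : Submodule ℂ (Fin n → ℂ) :=
  span ℂ (stdVec n '' Set.Icc 1 k)

/-- The action of an invertible linear map of `ℂ^n` on a chain of subspaces. -/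
def actFlag (n : ℕ) (g : (Fin n → ℂ) ≃ₗ[ℂ] (Fin n → ℂ))
    (V : ℕ → Submodule ℂ (Fin n → ℂ)) (k : ℕ) : Submodule ℂ (Fin n → ℂ) :=
  Submodule.map g.toLinearMap (V k)

/-- The orbit of the chain `V` under a set `B` of invertible linear maps. -/
def orbitOf (n : ℕ) (B : Set ((Fin n → ℂ) ≃ₗ[ℂ] (Fin n → ℂ)))
    (V : ℕ → Submodule ℂ (Fin n → ℂ)) : Set (ℕ → Submodule ℂ (Fin n → ℂ)) :=
  {V' | ∃ b ∈ B, actFlag n b V = V'}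

/-- The symmetric bilinear form `β(x,y) = ∑_{k=1}^n x_k y_{n+1-k}` on `ℂ^n`. -/
def betaF (n : ℕ) (x y : Fin n → ℂ) : ℂ := ∑ k : Fin n, x k * y k.rev

/-- `SO(n,ℂ)` for the form `β`. -/
def SOgrp (n : ℕ) : Set ((Fin n → ℂ) ≃ₗ[ℂ] (Fin n → ℂ)) :=
  {g | LinearMap.det g.toLinearMap = 1 ∧ ∀ x y, betaF n (g x) (g y) = betaF n x y}

/-- A maximal isotropic flag `V 1 ⊂ ⋯ ⊂ V l` in `ℂ^n` (values pinned outside `1..l`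
so that two flags are equal iff they agree in degrees `1, …, l`). -/
def IsIsoFlag (n l : ℕ) (V : ℕ → Submodule ℂ (Fin n → ℂ)) : Prop :=
  (∀ i, i ≤ l → finrank ℂ ↥(V i) = i) ∧ (∀ i, V i ≤ V (i + 1)) ∧ (∀ i, l ≤ i → V i = V l) ∧
    (∀ u ∈ V l, ∀ w ∈ V l, betaF n u w = 0)

/-- The isotropic flag `(v 1 ⊂ ⋯ ⊂ v l)` spanned by `v 1, …, v l`. -/
def isoFlagOf (n l : ℕ) (v : ℕ → Fin n → ℂ) (k : ℕ) : Submodule ℂ (Fin n → ℂ) :=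
  span ℂ (v '' Set.Icc 1 (min k l))

/-- `K = {g ∈ SO(2l+1) : g e_0 = e_0}` (here `e_0 = e_{l+1}`), a copy of `SO(2l)`. -/
def Kodd (l : ℕ) : Set ((Fin (2 * l + 1) → ℂ) ≃ₗ[ℂ] (Fin (2 * l + 1) → ℂ)) :=
  {g | g ∈ SOgrp (2 * l + 1) ∧
       g (stdVec (2 * l + 1) (l + 1)) = stdVec (2 * l + 1) (l + 1)}

/-- `V'` lies in the `K`-orbit of `V`. -/
def InKOddOrbit (l : ℕ) (V V' : ℕ → Submodule ℂ (Fin (2 * l + 1) → ℂ)) : Prop :=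
  ∃ g ∈ Kodd l, actFlag (2 * l + 1) g V = V'

/-- The maximal isotropic flag
`F'_y = (ı e_l + √2 ı e_0 - ı e_{-l} ⊂ e_1 ⊂ e_2 ⊂ ⋯ ⊂ e_{l-1})` in `ℂ^{2l+1}`. -/
def FyOddVec (l m : ℕ) : Fin (2 * l + 1) → ℂ :=
  if m = 1 then
    Complex.I • stdVec (2 * l + 1) l +
      ((Real.sqrt 2 : ℂ) * Complex.I) • stdVec (2 * l + 1) (l + 1) -
      Complex.I • stdVec (2 * l + 1) (l + 2)
  else stdVec (2 * l + 1) (m - 1)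

def FyOddFlag (l : ℕ) : ℕ → Submodule ℂ (Fin (2 * l + 1) → ℂ) :=
  isoFlagOf (2 * l + 1) l (FyOddVec l)

/-- `B_{2l-1}`: elements of `SO(2l+1)` fixing `e_0` and `e_l - e_{-l}` whose matrix in the
ordered basis `(e_1, …, e_l, e_0, e_{-l}, …, e_{-1})` (the standard ordered basis) is
upper triangular; a Borel subgroup of the copy of `SO(2l-1)` inside `K`. -/
def BOddSmall (l : ℕ) : Set ((Fin (2 * l + 1) → ℂ) ≃ₗ[ℂ] (Fin (2 * l + 1) → ℂ)) :=
  {g | g ∈ SOgrp (2 * l + 1) ∧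
       g (stdVec (2 * l + 1) (l + 1)) = stdVec (2 * l + 1) (l + 1) ∧
       g (stdVec (2 * l + 1) l - stdVec (2 * l + 1) (l + 2)) =
         stdVec (2 * l + 1) l - stdVec (2 * l + 1) (l + 2) ∧
       ∀ m, 1 ≤ m → m ≤ 2 * l + 1 →
         g (stdVec (2 * l + 1) m) ∈ stdSub (2 * l + 1) m}

/-- `B_{2l}`: the Borel subgroup of `K` of elements upper triangular with respect to the
ordered basis `(e_1, …, e_l, e_0, e_{-l}, …, e_{-1})` (the standard ordered basis). -/
def BOddFull (l : ℕ) : Set ((Fin (2 * l + 1) → ℂ) ≃ₗ[ℂ] (Fin (2 * l + 1) → ℂ)) :=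
  {g | g ∈ Kodd l ∧ ∀ m, 1 ≤ m → m ≤ 2 * l + 1 →
    g (stdVec (2 * l + 1) m) ∈ stdSub (2 * l + 1) m}

/-- The standard maximal isotropic flag `E_0 = (e_1 ⊂ ⋯ ⊂ e_l)`. -/
def EOddFlag (l : ℕ) : ℕ → Submodule ℂ (Fin (2 * l + 1) → ℂ) :=
  isoFlagOf (2 * l + 1) l (stdVec (2 * l + 1))

/-- Membership in `X_W`: chains `W_1 ⊂ ⋯ ⊂ W_l ⊂ W = e_0^⊥` with `dim W_i = i`,
`β` vanishing identically on `W_l`, and `dim (W_l ∩ span(e_1,…,e_l)) ≡ l (mod 2)`. -/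
def InXW (l : ℕ) (V : ℕ → Submodule ℂ (Fin (2 * l + 1) → ℂ)) : Prop :=
  IsIsoFlag (2 * l + 1) l V ∧
    (∀ v ∈ V l, betaF (2 * l + 1) v (stdVec (2 * l + 1) (l + 1)) = 0) ∧
    finrank ℂ ↥(V l ⊓ stdSub (2 * l + 1) l) % 2 = l % 2

/-! `B_{2l}` is the stabilizer of `E_0` in `K`, since an isometry preserving `span(e_1, …, e_k)`
for `k ≤ l` also preserves the orthogonal complements and is thus upper triangular.
`B_{2l-1}` is the stabilizer of `F'_y`. Indeed `k ∈ K` preserves `β(e_0, ·)`, whose kernel meets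
the `(j+1)`-st step of `F'_y` in `span(e_1, …, e_j)` and which forces `k` to fix the vector
spanning the first step, hence also `e_l - e_{-l}`. Such a `k` sends `e_l + e_{-l}` to
`± (e_l + e_{-l})` modulo `span(e_1, …, e_{l-1})`; the sign `+` makes `k` upper triangular, and
composing with the reflection in `e_l + e_{-l}` shows that the sign `-` has determinant `-1`.

For any action of a group `K`, sending `k • y` to `k⁻¹ • x` matches the `Stab x`-orbits on
`K • y` with the `Stab y`-orbits on `K • x`, so only the transitivity of `K` on `X_W` remains.
A product of `l - dim(W_l ∩ span(e_1, …, e_l))` reflections carries `span(e_1, …, e_l)` to `W_l`,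
with determinant `1` by the parity condition. A flag in `span(e_1, …, e_l)` given by a matrix `M`
that is the identity outside the top left `l × l` block is then reached by the isometry
`M (M*)⁻¹`, where `*` is the adjoint for `β`: the matrices `M` and `M*` commute.
-/

section OrbitCorrespondence

variable {G X : Type*} [Group G] [MulAction G X]

theorem orbit_stabilizer_eq_iff {x y z : X} :
    MulAction.orbit (MulAction.stabilizer G x) y = MulAction.orbit (MulAction.stabilizer G x) z ↔
      ∃ g : G, g • x = x ∧ g • z = y := by
  rw [MulAction.orbit_eq_iff]
  exact ⟨fun ⟨⟨g, hg⟩, hgz⟩ => ⟨g, hg, hgz⟩, fun ⟨g, hg, hgz⟩ => ⟨⟨g, hg⟩, hgz⟩⟩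

theorem orbit_stabilizer_smul_eq_iff (x y : X) (a b : G) :
    MulAction.orbit (MulAction.stabilizer G x) (a • y) =
        MulAction.orbit (MulAction.stabilizer G x) (b • y) ↔
      MulAction.orbit (MulAction.stabilizer G y) (a⁻¹ • x) =
        MulAction.orbit (MulAction.stabilizer G y) (b⁻¹ • x) := by
  simp only [orbit_stabilizer_eq_iff]
  constructor
  · rintro ⟨g, hx, hy⟩
    exact ⟨a⁻¹ * g * b, by simp [mul_smul, hy], by simp [mul_smul, hx]⟩
  · rintro ⟨g, hy, hx⟩
    exact ⟨a * g * b⁻¹, by simp [mul_smul, hx], by simp [mul_smul, hy]⟩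

open Pointwise in
theorem orbitOf_stabilizer {n : ℕ} (K : Subgroup ((Fin n → ℂ) ≃ₗ[ℂ] (Fin n → ℂ)))
    (F V : ℕ → Submodule ℂ (Fin n → ℂ)) :
    orbitOf n {g | g ∈ K ∧ actFlag n g F = F} V =
      MulAction.orbit (MulAction.stabilizer K F) V := by
  ext V'
  exact ⟨fun ⟨g, ⟨hgK, hgF⟩, hgV⟩ => ⟨⟨⟨g, hgK⟩, hgF⟩, hgV⟩,
    fun ⟨⟨⟨g, hgK⟩, hgF⟩, hgV⟩ => ⟨g, ⟨hgK, hgF⟩, hgV⟩⟩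

open Pointwise in
theorem orbitOf_stabilizer_actFlag_eq_iff {n : ℕ}
    {K : Subgroup ((Fin n → ℂ) ≃ₗ[ℂ] (Fin n → ℂ))} (E F : ℕ → Submodule ℂ (Fin n → ℂ))
    {a b : (Fin n → ℂ) ≃ₗ[ℂ] (Fin n → ℂ)} (ha : a ∈ K) (hb : b ∈ K) :
    orbitOf n {g | g ∈ K ∧ actFlag n g E = E} (actFlag n a F) =
        orbitOf n {g | g ∈ K ∧ actFlag n g E = E} (actFlag n b F) ↔
      orbitOf n {g | g ∈ K ∧ actFlag n g F = F} (actFlag n a.symm E) =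
        orbitOf n {g | g ∈ K ∧ actFlag n g F = F} (actFlag n b.symm E) := by
  simp only [orbitOf_stabilizer]
  exact orbit_stabilizer_smul_eq_iff E F (⟨a, ha⟩ : K) ⟨b, hb⟩

end OrbitCorrespondence

section Orthogonal

variable {R M : Type*} [CommRing R] [AddCommGroup M] [Module R M]

/-- The group of linear automorphisms preserving the bilinear form `B`. -/
def isometrySubgroup (B : LinearMap.BilinForm R M) : Subgroup (M ≃ₗ[R] M) where
  carrier := {g | B.IsOrthogonal g}
  mul_mem' {g h} hg hh x y := (hg (h x) (h y)).trans (hh x y)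
  one_mem' _ _ := rfl
  inv_mem' {g} hg x y := by
    simpa using (hg (g⁻¹ x) (g⁻¹ y)).symm

variable {B : LinearMap.BilinForm R M} {g : M ≃ₗ[R] M} {v : M}

theorem map_orthogonal_eq (hg : B.IsOrthogonal g) (N : Submodule R M) :
    (B.orthogonal N).map g.toLinearMap = B.orthogonal (N.map g.toLinearMap) := by
  ext x
  obtain ⟨x, rfl⟩ := g.surjective x
  rw [LinearMap.BilinForm.mem_orthogonal_iff, ← LinearEquiv.coe_coe, mem_map_equiv]
  simp only [LinearEquiv.coe_coe, LinearEquiv.symm_apply_apply,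
    LinearMap.BilinForm.mem_orthogonal_iff, mem_map,
    forall_exists_index, and_imp, forall_apply_eq_imp_iff₂, hg _ _]

theorem isOrthogonal_reflection (hB : B.IsSymm) (hv : B v v = 2) :
    B.IsOrthogonal (Module.reflection hv) := by
  intro x y
  simp only [Module.reflection_apply, map_sub, map_smul, LinearMap.sub_apply,
    LinearMap.smul_apply, smul_eq_mul, hv, hB.eq x v]
  ring

theorem det_reflection [Module.Free R M] [Module.Finite R M] {f : Module.Dual R M}
    (hf : f v = 2) : LinearMap.det (Module.reflection hf).toLinearMap = -1 := by
  have htransvection :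
      (Module.reflection hf).toLinearMap = LinearMap.transvection (-f) v := by
    ext x
    simp [Module.reflection_apply, LinearMap.transvection.apply, sub_eq_add_neg]
  rw [htransvection, LinearMap.transvection.det, LinearMap.neg_apply, hf]
  ring

theorem map_eq_of_map_span_singleton_sup_eq {K : Type*} [Field K] [Module K M] {g : M ≃ₗ[K] M}
    {f : Module.Dual K M} (hfg : ∀ x, f (g x) = f x) {v : M} (hv : f v ≠ 0) {N : Submodule K M}
    (hN : N ≤ LinearMap.ker f)
    (h : (span K {v} ⊔ N).map g.toLinearMap = span K {v} ⊔ N) : N.map g.toLinearMap = N := by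
  have hinf : (span K {v} ⊔ N) ⊓ LinearMap.ker f = N := by
    rw [sup_comm, sup_inf_assoc_of_le _ hN, sup_eq_left]
    rintro _ ⟨hx, hfx⟩
    obtain ⟨a, rfl⟩ := mem_span_singleton.1 hx
    have ha : a = 0 := by simpa [hv] using hfx
    simp [ha]
  have hker : (LinearMap.ker f).map g.toLinearMap = LinearMap.ker f := by
    ext x
    obtain ⟨x, rfl⟩ := g.surjective x
    simp [hfg]
  rw [← hinf, Submodule.map_inf _ g.injective, h, hker]

theorem apply_eq_self_of_map_span_singleton_eq {K : Type*} [Field K] [Module K M]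
    {g : M ≃ₗ[K] M} {f : Module.Dual K M} (hfg : ∀ x, f (g x) = f x) {v : M} (hv : f v ≠ 0)
    (h : (span K {v}).map g.toLinearMap = span K {v}) : g v = v := by
  have hgv : g v ∈ span K {v} := h ▸ mem_map_of_mem (mem_span_singleton_self v)
  obtain ⟨a, ha⟩ := mem_span_singleton.1 hgv
  have : a * f v = 1 * f v := by simpa [ha, hfg] using (map_smul f a v).symm
  rw [← ha, mul_right_cancel₀ hv this, one_smul]

end Orthogonal

section Isotropic

variable {K M : Type*} [Field K] [AddCommGroup M] [Module K M]
  {B : LinearMap.BilinForm K M} {U L : Submodule K M} {c c' : M} {r : M ≃ₗ[K] M}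

theorem exists_mem_mem_apply_eq_neg_one (hUL : L ⊓ B.orthogonal U ≤ U) (hL : ¬ L ≤ U) :
    ∃ c ∈ U, ∃ c' ∈ L, B c c' = -1 := by
  obtain ⟨y, hyL, hyU⟩ := SetLike.not_le_iff_exists.1 hL
  have hy : ¬ ∀ c ∈ U, B c y = 0 := fun h => hyU (hUL ⟨hyL, h⟩)
  push Not at hy
  obtain ⟨c, hc, hcy⟩ := hy
  exact ⟨c, hc, -(B c y)⁻¹ • y, L.smul_mem _ hyL, by simp [hcy]⟩

theorem apply_sub_self_eq_two (hB : B.IsSymm) (hc : B c c = 0) (hc' : B c' c' = 0)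
    (hcc' : B c c' = -1) : B (c - c') (c - c') = 2 := by
  have hc'c : B c' c = -1 := (hB.eq c c').symm.trans hcc'
  simp only [map_sub, LinearMap.sub_apply, hc, hc', hcc', hc'c]
  norm_num

theorem reflection_sub_apply_of_mem (hv : B (c - c') (c - c') = 2) (hL : L ≤ B.orthogonal L)
    (hc' : c' ∈ L) {y : M} (hy : y ∈ L) :
    Module.reflection hv y = y - B c y • (c - c') := by
  have hc'y : B c' y = 0 := hL hy c' hc'
  simp [Module.reflection_apply, hc'y]

theorem reflection_sub_apply_eq_self (hv : B (c - c') (c - c') = 2) (hc : c ∈ U) (hc' : c' ∈ L)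
    {x : M} (hx : x ∈ B.orthogonal (U ⊔ L)) : Module.reflection hv x = x := by
  have hvx : B (c - c') x = 0 := hx _ (sub_mem (mem_sup_left hc) (mem_sup_right hc'))
  rw [Module.reflection_apply, hvx, zero_smul, sub_zero]

section Swap

variable (hc : c ∈ U) (hc' : c' ∈ L) (hr : ∀ y ∈ L, r y = y - B c y • (c - c'))

include hc hc' hr

theorem map_le_sup_of_swap : L.map r.toLinearMap ≤ U ⊔ L := by
  rintro _ ⟨y, hy, rfl⟩
  rw [LinearEquiv.coe_coe, hr y hy]
  exact sub_mem (mem_sup_right hy)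
    (smul_mem _ _ (sub_mem (mem_sup_left hc) (mem_sup_right hc')))

theorem map_inf_orthogonal_le_of_swap (hU : U ≤ B.orthogonal U) (hUL : L ⊓ B.orthogonal U ≤ U) :
    L.map r.toLinearMap ⊓ B.orthogonal U ≤ (L ⊓ U) ⊔ span K {c} := by
  rintro _ ⟨⟨y, hy, rfl⟩, hrU⟩
  have hsum : y + B c y • c' = r y + B c y • c := by rw [hr y hy]; module
  have hL : y + B c y • c' ∈ L := add_mem hy (L.smul_mem _ hc')
  have hU : y + B c y • c' ∈ U :=
    hUL ⟨hL, hsum ▸ add_mem hrU (smul_mem _ _ (hU hc))⟩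
  rw [LinearEquiv.coe_coe, ← sub_eq_of_eq_add hsum]
  exact sub_mem (mem_sup_left ⟨hL, hU⟩)
    (mem_sup_right (smul_mem _ _ (mem_span_singleton_self c)))

theorem map_inf_eq_of_swap (hU : U ≤ B.orthogonal U) (hUL : L ⊓ B.orthogonal U ≤ U)
    (hcc' : B c c' = -1) : L.map r.toLinearMap ⊓ U = (L ⊓ U) ⊔ span K {c} := by
  refine le_antisymm ((inf_le_inf_left _ hU).trans
    (map_inf_orthogonal_le_of_swap hc hc' hr hU hUL)) (sup_le ?_ ?_)
  · rintro x ⟨hxL, hxU⟩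
    have hcx : B c x = 0 := hU hxU c hc
    exact ⟨⟨x, hxL, by simp [hr x hxL, hcx]⟩, hxU⟩
  · rw [span_singleton_le_iff_mem]
    exact ⟨⟨c', hc', by simp [hr c' hc', hcc']⟩, hc⟩

theorem finrank_map_inf_of_swap [FiniteDimensional K M] (hU : U ≤ B.orthogonal U)
    (hL : L ≤ B.orthogonal L) (hUL : L ⊓ B.orthogonal U ≤ U) (hcc' : B c c' = -1) :
    finrank K ↥(L.map r.toLinearMap ⊓ U) = finrank K ↥(L ⊓ U) + 1 := by
  have hcL : c ∉ L ⊓ U := fun h => by simpa [hcc'] using hL hc' c h.1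
  rw [map_inf_eq_of_swap hc hc' hr hU hUL hcc', finrank_sup_span_singleton hcL]

end Swap

/-- The product of the reflections exchanging, one at a time, a vector of `U` with a vector of
`L` pairing nontrivially with it. -/
theorem exists_isOrthogonal_map_eq_of_isotropic [FiniteDimensional K M] (hB : B.IsSymm)
    (hU : U ≤ B.orthogonal U) (hL : L ≤ B.orthogonal L) (hUL : L ⊓ B.orthogonal U ≤ U)
    (hfr : finrank K L = finrank K U) {d : ℕ} (hd : finrank K ↥(L ⊓ U) + d = finrank K U) :
    ∃ g : M ≃ₗ[K] M, B.IsOrthogonal g ∧ U.map g.toLinearMap = L ∧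
      LinearMap.det g.toLinearMap = (-1) ^ d ∧ ∀ x ∈ B.orthogonal (U ⊔ L), g x = x := by
  induction d generalizing L with
  | zero =>
    have hLU : L = U :=
      (eq_of_le_of_finrank_eq inf_le_left (hd.trans hfr.symm)).symm.trans
        (eq_of_le_of_finrank_eq inf_le_right hd)
    exact ⟨LinearEquiv.refl K M, fun _ _ => rfl, by simp [hLU], by simp, fun _ _ => rfl⟩
  | succ d ih =>
    have hnot : ¬ L ≤ U := fun h => by
      rw [inf_eq_left.2 h] at hd
      omega
    obtain ⟨c, hc, c', hc', hcc'⟩ := exists_mem_mem_apply_eq_neg_one hUL hnot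
    have hv : B (c - c') (c - c') = 2 := apply_sub_self_eq_two hB (hU hc c hc) (hL hc' c' hc') hcc'
    set r := Module.reflection hv
    have hr : ∀ y ∈ L, r y = y - B c y • (c - c') := fun y hy =>
      reflection_sub_apply_of_mem hv hL hc' hy
    have hrB : B.IsOrthogonal r := isOrthogonal_reflection hB hv
    obtain ⟨g, hg, hgU, hgdet, hgfix⟩ := ih (L := L.map r.toLinearMap)
      (by rw [← map_orthogonal_eq hrB]; exact map_mono hL)
      ((map_inf_orthogonal_le_of_swap hc hc' hr hU hUL).trans
        (sup_le inf_le_right ((span_singleton_le_iff_mem _ _).2 hc)))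
      ((LinearEquiv.finrank_map_eq r L).trans hfr)
      (by rw [finrank_map_inf_of_swap hc hc' hr hU hL hUL hcc']; omega)
    refine ⟨r * g, fun x y => (hrB (g x) (g y)).trans (hg x y), ?_, ?_, fun x hx => ?_⟩
    · have hrr : r.toLinearMap ∘ₗ r.toLinearMap = LinearMap.id :=
        LinearMap.ext (Module.involutive_reflection hv)
      rw [LinearEquiv.mul_eq_trans, LinearEquiv.coe_trans, Submodule.map_comp, hgU,
        ← Submodule.map_comp, hrr, Submodule.map_id]
    · rw [LinearEquiv.mul_eq_trans, LinearEquiv.coe_trans, LinearMap.det_comp, hgdet,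
        det_reflection hv, pow_succ']
    · have hgx : g x = x := hgfix x (LinearMap.BilinForm.orthogonal_le
        (sup_le le_sup_left (map_le_sup_of_swap hc hc' hr)) hx)
      rw [LinearEquiv.mul_apply, hgx, reflection_sub_apply_eq_self hv hc hc' hx]

end Isotropic

theorem exists_span_image_Icc_eq {K M : Type*} [Field K] [AddCommGroup M] [Module K M]
    [FiniteDimensional K M] {l : ℕ} {V : ℕ → Submodule K M} (hV : Monotone V)
    (hfr : ∀ i ≤ l, finrank K (V i) = i) :
    ∃ w : ℕ → M, ∀ i ≤ l, span K (w '' Set.Icc 1 i) = V i := by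
  have hnew : ∀ i, ∃ x : M, i < l → x ∈ V (i + 1) ∧ x ∉ V i := by
    intro i
    by_cases hi : i < l
    · have hlt : V i < V (i + 1) := (hV i.le_succ).lt_of_ne fun h => by
        have := hfr (i + 1) hi
        rw [← h, hfr i hi.le] at this
        omega
      obtain ⟨x, hx⟩ := SetLike.exists_of_lt hlt
      exact ⟨x, fun _ => hx⟩
    · exact ⟨0, fun h => absurd h hi⟩
  choose x hx using hnew
  refine ⟨fun i => x (i - 1), fun i hi => ?_⟩
  induction i with
  | zero => simp [finrank_eq_zero.1 (hfr 0 hi)]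
  | succ i ih =>
    obtain ⟨hmem, hnot⟩ := hx i hi
    rw [← Set.insert_Icc_right_eq_Icc_add_one (by omega), Set.image_insert_eq, span_insert,
      ih (by omega), sup_comm, Nat.add_sub_cancel]
    refine eq_of_le_of_finrank_eq
      (sup_le (hV i.le_succ) ((span_singleton_le_iff_mem _ _).2 hmem)) ?_
    rw [finrank_sup_span_singleton hnot, hfr i (by omega), hfr (i + 1) hi]

section StandardFlag

variable {n k m : ℕ} {x y : Fin n → ℂ}

theorem stdVec_apply (i : Fin n) : stdVec n m i = if (i : ℕ) + 1 = m then 1 else 0 := by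
  unfold stdVec
  split_ifs with hm him him
  · subst him
    simp
  · rw [Pi.single_eq_of_ne]
    rintro rfl
    exact him (Nat.sub_add_cancel hm.1)
  · omega
  · rfl

theorem single_one_eq_stdVec (i : Fin n) : (Pi.single i 1 : Fin n → ℂ) = stdVec n (i + 1) := by
  ext j
  simp [stdVec_apply, Pi.single_apply, Fin.ext_iff]

theorem stdVec_mem_stdSub (hm : 1 ≤ m) (hmk : m ≤ k) : stdVec n m ∈ stdSub n k :=
  subset_span ⟨m, ⟨hm, hmk⟩, rfl⟩

theorem stdSub_mono {k' : ℕ} (h : k ≤ k') : stdSub n k ≤ stdSub n k' :=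
  span_mono (Set.image_mono (Set.Icc_subset_Icc_right h))

theorem stdSub_zero : stdSub n 0 = ⊥ := by
  rw [stdSub, Set.Icc_eq_empty (by omega), Set.image_empty, span_empty]

theorem stdSub_succ : stdSub n (k + 1) = span ℂ {stdVec n (k + 1)} ⊔ stdSub n k := by
  rw [stdSub, ← Set.insert_Icc_right_eq_Icc_add_one (by omega), Set.image_insert_eq, span_insert,
    stdSub]

theorem mem_stdSub : x ∈ stdSub n k ↔ ∀ i : Fin n, k ≤ i → x i = 0 := by
  constructor
  · intro hx i hi
    have hle : stdSub n k ≤ LinearMap.ker (LinearMap.proj (R := ℂ) (φ := fun _ => ℂ) i) := by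
      rw [stdSub, span_le]
      rintro _ ⟨m, hm, rfl⟩
      have : ¬ (i : ℕ) + 1 = m := by
        have := hm.2
        omega
      simp [stdVec_apply, this]
    exact hle hx
  · intro hx
    rw [pi_eq_sum_univ' x]
    refine sum_mem fun i _ => ?_
    by_cases hi : k ≤ i
    · simp [hx i hi]
    · rw [single_one_eq_stdVec]
      exact smul_mem _ _ (stdVec_mem_stdSub (by omega) (by omega))

theorem stdSub_self : stdSub n n = ⊤ :=
  eq_top_iff.2 fun _ _ => mem_stdSub.2 fun i hi => absurd i.isLt (by omega)

theorem finrank_stdSub (hk : k ≤ n) : finrank ℂ (stdSub n k) = k := by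
  induction k with
  | zero => rw [stdSub_zero, finrank_bot]
  | succ k ih =>
    have hnew : stdVec n (k + 1) ∉ stdSub n k := fun h => by
      simpa [stdVec_apply] using mem_stdSub.1 h ⟨k, hk⟩ le_rfl
    rw [stdSub_succ, sup_comm, finrank_sup_span_singleton hnew, ih (by omega)]

/-- The form `β`, bundled as a bilinear form. -/
def betaForm (n : ℕ) : LinearMap.BilinForm ℂ (Fin n → ℂ) :=
  LinearMap.mk₂ ℂ (betaF n)
    (fun _ _ _ => by simp [betaF, add_mul, Finset.sum_add_distrib])
    (fun _ _ _ => by simp [betaF, mul_assoc, Finset.mul_sum])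
    (fun _ _ _ => by simp [betaF, mul_add, Finset.sum_add_distrib])
    (fun _ _ _ => by simp [betaF, mul_left_comm, Finset.mul_sum])

theorem betaForm_apply : betaForm n x y = ∑ i, x i * y i.rev := rfl

theorem betaForm_isSymm (n : ℕ) : (betaForm n).IsSymm := by
  refine ⟨fun x y => ?_⟩
  rw [betaForm_apply, ← Equiv.sum_comp Fin.revPerm]
  simp [betaForm_apply, mul_comm]

theorem betaForm_stdVec_left (i : Fin n) (hi : (i : ℕ) + m = n) :
    betaForm n (stdVec n m) x = x i := by
  rw [betaForm_apply, Finset.sum_eq_single i.rev]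
  · simp [stdVec_apply, Fin.val_rev, show n - (i + 1) + 1 = m by omega]
  · intro j _ hj
    have : ¬ (j : ℕ) + 1 = m := fun h => hj (Fin.ext (by rw [Fin.val_rev]; omega))
    simp [stdVec_apply, this]
  · simp

theorem betaForm_stdVec_stdVec {m' : ℕ} (hm : 1 ≤ m) (hmn : m ≤ n) :
    betaForm n (stdVec n m) (stdVec n m') = if m + m' = n + 1 then 1 else 0 := by
  rw [betaForm_stdVec_left ⟨n - m, by omega⟩ (by dsimp only; omega), stdVec_apply]
  congr 1
  grind

theorem orthogonal_stdSub (hk : k ≤ n) :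
    (betaForm n).orthogonal (stdSub n k) = stdSub n (n - k) := by
  ext x
  constructor
  · intro hx
    refine mem_stdSub.2 fun i hi => ?_
    rw [← betaForm_stdVec_left (x := x) (m := n - i) i (by omega)]
    exact hx _ (stdVec_mem_stdSub (by omega) (by omega))
  · intro hx y hy
    rw [betaForm_apply]
    refine Finset.sum_eq_zero fun i _ => ?_
    by_cases hi : k ≤ i
    · rw [mem_stdSub.1 hy i hi, zero_mul]
    · rw [mem_stdSub.1 hx i.rev (by rw [Fin.val_rev]; omega), mul_zero]

theorem stdSub_le_orthogonal_self (hk : 2 * k ≤ n) :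
    stdSub n k ≤ (betaForm n).orthogonal (stdSub n k) := by
  rw [orthogonal_stdSub (by omega)]
  exact stdSub_mono (by omega)

end StandardFlag

section UpperTriangular

variable {n : ℕ} {g : (Fin n → ℂ) ≃ₗ[ℂ] (Fin n → ℂ)}

/-- The matrix of `g` in the standard ordered basis is upper triangular, in the form in which the
Borel subgroups `BOddFull` and `BOddSmall` express it. -/
def IsUpperTriangular (g : (Fin n → ℂ) ≃ₗ[ℂ] (Fin n → ℂ)) : Prop :=
  ∀ m, 1 ≤ m → m ≤ n → g (stdVec n m) ∈ stdSub n m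

theorem IsUpperTriangular.map_stdSub (hg : IsUpperTriangular g) {k : ℕ} (hk : k ≤ n) :
    (stdSub n k).map g.toLinearMap = stdSub n k := by
  refine eq_of_le_of_finrank_eq (map_le_iff_le_comap.2 (span_le.2 ?_))
    (LinearEquiv.finrank_map_eq g _)
  rintro _ ⟨m, ⟨hm, hmk⟩, rfl⟩
  exact stdSub_mono hmk (hg m hm (hmk.trans hk))

theorem isUpperTriangular_of_map_stdSub (hg : (betaForm n).IsOrthogonal g)
    (h : ∀ k, 2 * k ≤ n → (stdSub n k).map g.toLinearMap = stdSub n k) :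
    IsUpperTriangular g := by
  intro m hm hmn
  have hmap : (stdSub n m).map g.toLinearMap = stdSub n m := by
    by_cases hle : 2 * m ≤ n
    · exact h m hle
    · rw [← Nat.sub_sub_self hmn, ← orthogonal_stdSub (by omega), map_orthogonal_eq hg,
        h (n - m) (by omega)]
  exact hmap.le (mem_map_of_mem (stdVec_mem_stdSub hm le_rfl))

theorem betaForm_eq_mul_of_mem_stdSub {a : Fin n} {x y : Fin n → ℂ} (hx : x ∈ stdSub n (a + 1))
    (hy : y ∈ stdSub n (a.rev + 1)) : betaForm n x y = x a * y a.rev := by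
  rw [betaForm_apply, Finset.sum_eq_single a]
  · intro i _ hia
    rcases lt_or_gt_of_ne hia with hlt | hgt
    · rw [mem_stdSub.1 hy i.rev (Fin.rev_lt_rev.2 hlt), mul_zero]
    · rw [mem_stdSub.1 hx i hgt, zero_mul]
  · simp

theorem IsUpperTriangular.diag_mul_diag_rev (hg : IsUpperTriangular g)
    (hgB : (betaForm n).IsOrthogonal g) (a : Fin n) :
    g (stdVec n (a + 1)) a * g (stdVec n (a.rev + 1)) a.rev = 1 := by
  rw [← betaForm_eq_mul_of_mem_stdSub (hg _ (by omega) (by omega)) (hg _ (by omega) (by omega)),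
    hgB, betaForm_stdVec_stdVec (by omega) (by omega), if_pos]
  rw [Fin.val_rev]
  omega

theorem IsUpperTriangular.det_eq_prod_diag (hg : IsUpperTriangular g) :
    LinearMap.det g.toLinearMap = ∏ a : Fin n, g (stdVec n (a + 1)) a := by
  have hentry : ∀ i j, LinearMap.toMatrix' g.toLinearMap i j = g (stdVec n (j + 1)) i := by
    intro i j
    rw [LinearMap.toMatrix'_apply, ← single_one_eq_stdVec]
    rfl
  rw [← LinearMap.det_toMatrix', Matrix.det_of_isUpperTriangular]
  · simp only [hentry]
  · intro i j hji
    rw [hentry]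
    exact mem_stdSub.1 (hg _ (by omega) (by omega)) i hji

theorem IsUpperTriangular.det_eq_one (hg : IsUpperTriangular g)
    (hgB : (betaForm n).IsOrthogonal g)
    (hmid : ∀ a : Fin n, a.rev = a → g (stdVec n (a + 1)) = stdVec n (a + 1)) :
    LinearMap.det g.toLinearMap = 1 := by
  rw [hg.det_eq_prod_diag]
  refine Finset.prod_involution (fun a _ => a.rev) (fun a _ => hg.diag_mul_diag_rev hgB a)
    (fun a _ ha hrev => ha ?_) (by simp) (by simp)
  rw [hmid a hrev, stdVec_apply, if_pos rfl]

end UpperTriangular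

section Stabilizers

variable {l : ℕ} {g : (Fin (2 * l + 1) → ℂ) ≃ₗ[ℂ] (Fin (2 * l + 1) → ℂ)}

/-- The group `K`, bundled as a subgroup: `Kodd l` is its carrier. -/
def koddSubgroup (l : ℕ) : Subgroup ((Fin (2 * l + 1) → ℂ) ≃ₗ[ℂ] (Fin (2 * l + 1) → ℂ)) :=
  (LinearEquiv.det.ker ⊓ isometrySubgroup (betaForm (2 * l + 1))) ⊓
    MulAction.stabilizer _ (stdVec (2 * l + 1) (l + 1))

theorem mem_koddSubgroup : g ∈ koddSubgroup l ↔ g ∈ Kodd l :=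
  and_congr_left' <| and_congr_left' <| by
    change LinearEquiv.det g = 1 ↔ _
    rw [Units.ext_iff, LinearEquiv.coe_det, Units.val_one]

/-- The vector `e_l + e_{-l}`, which the stabilizer of `e_0` and `F'_y` in the isometry group fixes
up to sign modulo `span(e_1, …, e_{l-1})`. -/
def hyperbolicSum (l : ℕ) : Fin (2 * l + 1) → ℂ :=
  stdVec (2 * l + 1) l + stdVec (2 * l + 1) (l + 2)

/-- The vector `e_l - e_{-l}`, which `B_{2l-1}` fixes. -/
def hyperbolicDiff (l : ℕ) : Fin (2 * l + 1) → ℂ :=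
  stdVec (2 * l + 1) l - stdVec (2 * l + 1) (l + 2)

theorem FyOddVec_one : FyOddVec l 1 = Complex.I • hyperbolicDiff l +
    ((Real.sqrt 2 : ℂ) * Complex.I) • stdVec (2 * l + 1) (l + 1) := by
  rw [FyOddVec, if_pos rfl, hyperbolicDiff]
  module

theorem FyOddFlag_eq_min (k : ℕ) : FyOddFlag l k = FyOddFlag l (min k l) := by
  simp [FyOddFlag, isoFlagOf]

theorem FyOddFlag_zero : FyOddFlag l 0 = ⊥ := by
  simp [FyOddFlag, isoFlagOf]

theorem FyOddFlag_succ {j : ℕ} (hj : j < l) :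
    FyOddFlag l (j + 1) = span ℂ {FyOddVec l 1} ⊔ stdSub (2 * l + 1) j := by
  induction j with
  | zero => simp [FyOddFlag, isoFlagOf, stdSub_zero, min_eq_left (Nat.succ_le_of_lt hj)]
  | succ j ih =>
    have hflag : FyOddFlag l (j + 1 + 1) =
        span ℂ {stdVec (2 * l + 1) (j + 1)} ⊔ FyOddFlag l (j + 1) := by
      rw [FyOddFlag, isoFlagOf, isoFlagOf, min_eq_left (by omega), min_eq_left (by omega),
        ← Set.insert_Icc_right_eq_Icc_add_one (by omega), Set.image_insert_eq, span_insert]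
      rfl
    rw [hflag, ih (by omega), stdSub_succ, sup_left_comm]

theorem betaForm_central_left (x : Fin (2 * l + 1) → ℂ) :
    betaForm _ (stdVec (2 * l + 1) (l + 1)) x = x ⟨l, by omega⟩ :=
  betaForm_stdVec_left _ (by dsimp only; omega)

theorem betaForm_hyperbolicSum_left (hl : 1 ≤ l) (x : Fin (2 * l + 1) → ℂ) :
    betaForm _ (hyperbolicSum l) x = x ⟨l + 1, by omega⟩ + x ⟨l - 1, by omega⟩ := by
  rw [hyperbolicSum, map_add, LinearMap.add_apply,
    betaForm_stdVec_left ⟨l + 1, by omega⟩ (by dsimp only; omega),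
    betaForm_stdVec_left ⟨l - 1, by omega⟩ (by dsimp only; omega)]

theorem betaForm_hyperbolicDiff_left (hl : 1 ≤ l) (x : Fin (2 * l + 1) → ℂ) :
    betaForm _ (hyperbolicDiff l) x = x ⟨l + 1, by omega⟩ - x ⟨l - 1, by omega⟩ := by
  rw [hyperbolicDiff, map_sub, LinearMap.sub_apply,
    betaForm_stdVec_left ⟨l + 1, by omega⟩ (by dsimp only; omega),
    betaForm_stdVec_left ⟨l - 1, by omega⟩ (by dsimp only; omega)]

theorem betaForm_hyperbolicSum_self (hl : 1 ≤ l) :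
    betaForm _ (hyperbolicSum l) (hyperbolicSum l) = 2 := by
  rw [betaForm_hyperbolicSum_left hl]
  simp [hyperbolicSum, stdVec_apply, hl, show ¬ l + 1 + 1 = l by omega, one_add_one_eq_two]

theorem betaForm_hyperbolicDiff_hyperbolicSum (hl : 1 ≤ l) :
    betaForm _ (hyperbolicDiff l) (hyperbolicSum l) = 0 := by
  rw [betaForm_hyperbolicDiff_left hl]
  simp [hyperbolicSum, stdVec_apply, hl, show ¬ l + 1 + 1 = l by omega]

theorem betaForm_central_hyperbolicSum :
    betaForm _ (stdVec (2 * l + 1) (l + 1)) (hyperbolicSum l) = 0 := by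
  rw [betaForm_central_left]
  simp [hyperbolicSum, stdVec_apply]

theorem betaForm_central_FyOddVec_one :
    betaForm _ (stdVec (2 * l + 1) (l + 1)) (FyOddVec l 1) ≠ 0 := by
  rw [betaForm_central_left]
  simp [FyOddVec, stdVec_apply]

theorem stdSub_le_ker_betaForm_central {j : ℕ} (hj : j ≤ l) :
    stdSub (2 * l + 1) j ≤ LinearMap.ker (betaForm _ (stdVec (2 * l + 1) (l + 1))) := fun x hx =>
  (betaForm_central_left x).trans (mem_stdSub.1 hx _ hj)

theorem actFlag_EOddFlag_eq_iff (hg : (betaForm _).IsOrthogonal g) :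
    actFlag _ g (EOddFlag l) = EOddFlag l ↔ IsUpperTriangular g := by
  constructor
  · refine fun h => isUpperTriangular_of_map_stdSub hg fun k hk => ?_
    have hEk : EOddFlag l k = stdSub (2 * l + 1) k := by
      rw [EOddFlag, isoFlagOf, min_eq_left (by omega), stdSub]
    rw [← hEk]
    exact congrFun h k
  · exact fun h => funext fun k => h.map_stdSub (k := min k l) (by omega)

theorem BOddFull_eq (l : ℕ) : BOddFull l =
    {g | g ∈ koddSubgroup l ∧ actFlag (2 * l + 1) g (EOddFlag l) = EOddFlag l} := by
  ext g
  simp only [Set.mem_ofPred_eq, mem_koddSubgroup]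
  exact and_congr_right fun hg => (actFlag_EOddFlag_eq_iff hg.1.2).symm

theorem apply_FyOddVec_one_eq_iff
    (hg : g (stdVec (2 * l + 1) (l + 1)) = stdVec (2 * l + 1) (l + 1)) :
    g (FyOddVec l 1) = FyOddVec l 1 ↔ g (hyperbolicDiff l) = hyperbolicDiff l := by
  rw [FyOddVec_one, map_add, map_smul, map_smul, hg, add_left_inj]
  exact smul_right_injective _ Complex.I_ne_zero |>.eq_iff

theorem actFlag_FyOddFlag_eq_iff (hl : 1 ≤ l) (hg : g ∈ Kodd l) :
    actFlag _ g (FyOddFlag l) = FyOddFlag l ↔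
      g (hyperbolicDiff l) = hyperbolicDiff l ∧
        ∀ j < l, (stdSub _ j).map g.toLinearMap = stdSub (2 * l + 1) j := by
  rw [← apply_FyOddVec_one_eq_iff hg.2]
  constructor
  · intro h
    have hinv : ∀ x, betaForm _ (stdVec (2 * l + 1) (l + 1)) (g x) =
        betaForm _ (stdVec (2 * l + 1) (l + 1)) x := fun x => by
      conv_lhs => rw [← hg.2]
      exact hg.1.2 _ x
    have hflag : ∀ j < l, (span ℂ {FyOddVec l 1} ⊔ stdSub _ j).map g.toLinearMap =
        span ℂ {FyOddVec l 1} ⊔ stdSub (2 * l + 1) j := fun j hj => by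
      rw [← FyOddFlag_succ hj]
      exact congrFun h (j + 1)
    refine ⟨apply_eq_self_of_map_span_singleton_eq hinv betaForm_central_FyOddVec_one ?_,
      fun j hj => map_eq_of_map_span_singleton_sup_eq hinv betaForm_central_FyOddVec_one
        (stdSub_le_ker_betaForm_central hj.le) (hflag j hj)⟩
    simpa [stdSub_zero] using hflag 0 hl
  · rintro ⟨hv, hstd⟩
    ext1 k
    rw [actFlag, FyOddFlag_eq_min]
    rcases hk : min k l with _ | j
    · rw [FyOddFlag_zero, Submodule.map_bot]
    · rw [FyOddFlag_succ (by omega), Submodule.map_sup, hstd j (by omega), map_span,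
        Set.image_singleton, LinearEquiv.coe_coe, hv]

theorem mem_stdSub_of_orthogonal (hl : 1 ≤ l) {x : Fin (2 * l + 1) → ℂ}
    (hstd : x ∈ (betaForm _).orthogonal (stdSub (2 * l + 1) (l - 1)))
    (hcentral : betaForm _ (stdVec (2 * l + 1) (l + 1)) x = 0)
    (hsum : betaForm _ (hyperbolicSum l) x = 0) (hdiff : betaForm _ (hyperbolicDiff l) x = 0) :
    x ∈ stdSub (2 * l + 1) (l - 1) := by
  rw [orthogonal_stdSub (by omega)] at hstd
  rw [betaForm_central_left] at hcentral
  rw [betaForm_hyperbolicSum_left hl] at hsum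
  rw [betaForm_hyperbolicDiff_left hl] at hdiff
  have hneg : x ⟨l - 1, by omega⟩ = 0 := by linear_combination (hsum - hdiff) / 2
  have hpos : x ⟨l + 1, by omega⟩ = 0 := by linear_combination (hsum + hdiff) / 2
  refine mem_stdSub.2 fun i hi => ?_
  by_cases hi' : 2 * l + 1 - (l - 1) ≤ i
  · exact mem_stdSub.1 hstd i hi'
  · obtain h | h | h : (i : ℕ) = l - 1 ∨ (i : ℕ) = l ∨ (i : ℕ) = l + 1 := by omega
    · rwa [show i = ⟨l - 1, by omega⟩ from Fin.ext h]
    · rwa [show i = ⟨l, by omega⟩ from Fin.ext h]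
    · rwa [show i = ⟨l + 1, by omega⟩ from Fin.ext h]

theorem betaForm_hyperbolicSum_of_mem_stdSub (hl : 1 ≤ l) {x : Fin (2 * l + 1) → ℂ}
    (hx : x ∈ stdSub (2 * l + 1) (l - 1)) : betaForm _ (hyperbolicSum l) x = 0 := by
  rw [betaForm_hyperbolicSum_left hl, mem_stdSub.1 hx _ (by simp only; omega),
    mem_stdSub.1 hx _ le_rfl, add_zero]

section Hyperbolic

variable (hl : 1 ≤ l) (hg : (betaForm _).IsOrthogonal g)
  (hcentral : g (stdVec (2 * l + 1) (l + 1)) = stdVec (2 * l + 1) (l + 1))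
  (hdiff : g (hyperbolicDiff l) = hyperbolicDiff l)
  (hstd : ∀ j < l, (stdSub _ j).map g.toLinearMap = stdSub (2 * l + 1) j)

include hl hg hdiff hstd

include hcentral in
theorem apply_hyperbolicSum_sub_smul_mem :
    g (hyperbolicSum l) -
      (betaForm _ (hyperbolicSum l) (g (hyperbolicSum l)) / 2) • hyperbolicSum l ∈
        stdSub (2 * l + 1) (l - 1) := by
  refine mem_stdSub_of_orthogonal hl (fun y hy => ?_) ?_ ?_ ?_
  · have hgy : y ∈ (stdSub _ (l - 1)).map g.toLinearMap := (hstd (l - 1) (by omega)).ge hy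
    obtain ⟨z, hz, rfl⟩ := hgy
    have hzp : betaForm _ z (hyperbolicSum l) = 0 :=
      ((betaForm_isSymm _).eq _ _).trans (betaForm_hyperbolicSum_of_mem_stdSub hl hz)
    have hyp : betaForm _ (g z) (hyperbolicSum l) = 0 :=
      ((betaForm_isSymm _).eq _ _).trans (betaForm_hyperbolicSum_of_mem_stdSub hl hy)
    rw [LinearEquiv.coe_coe, map_sub, map_smul, hg, hzp, hyp, smul_zero, sub_zero]
  · rw [map_sub, map_smul, betaForm_central_hyperbolicSum, ← hcentral, hg,
      betaForm_central_hyperbolicSum, smul_zero, sub_zero]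
  · rw [map_sub, map_smul, betaForm_hyperbolicSum_self hl, smul_eq_mul,
      div_mul_cancel₀ _ two_ne_zero, sub_self]
  · rw [map_sub, map_smul, betaForm_hyperbolicDiff_hyperbolicSum hl, ← hdiff, hg,
      betaForm_hyperbolicDiff_hyperbolicSum hl, smul_zero, sub_zero]

include hcentral in
theorem apply_hyperbolicSum_sub_or_add_mem :
    g (hyperbolicSum l) - hyperbolicSum l ∈ stdSub (2 * l + 1) (l - 1) ∨
      g (hyperbolicSum l) + hyperbolicSum l ∈ stdSub (2 * l + 1) (l - 1) := by
  have hmem := apply_hyperbolicSum_sub_smul_mem hl hg hcentral hdiff hstd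
  set c := betaForm _ (hyperbolicSum l) (g (hyperbolicSum l)) / 2
  set u := g (hyperbolicSum l) - c • hyperbolicSum l with hu
  have hpp := betaForm_hyperbolicSum_self hl
  have hpu : betaForm _ (hyperbolicSum l) u = 0 := betaForm_hyperbolicSum_of_mem_stdSub hl hmem
  have huu : betaForm _ u u = 0 := stdSub_le_orthogonal_self (by omega) hmem u hmem
  have hgp : g (hyperbolicSum l) = c • hyperbolicSum l + u := by rw [hu]; abel
  have hsq : c * c = 1 := by
    have h := hg (hyperbolicSum l) (hyperbolicSum l)
    simp only [hgp, map_add, map_smul, LinearMap.add_apply, LinearMap.smul_apply, smul_eq_mul,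
      hpp, hpu, huu, (betaForm_isSymm _).eq u] at h
    linear_combination h / 2
  rcases mul_self_eq_one_iff.1 hsq with h1 | h1
  · left; simpa [hu, h1] using hmem
  · right; simpa [hu, h1] using hmem

theorem isUpperTriangular_of_apply_hyperbolicSum_sub_mem
    (hsum : g (hyperbolicSum l) - hyperbolicSum l ∈ stdSub (2 * l + 1) (l - 1)) :
    IsUpperTriangular g := by
  have hvec : stdVec (2 * l + 1) l = (2⁻¹ : ℂ) • (hyperbolicSum l + hyperbolicDiff l) := by
    rw [hyperbolicSum, hyperbolicDiff]
    module
  have hsub : g (stdVec _ l) - stdVec _ l ∈ stdSub (2 * l + 1) (l - 1) := by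
    have heq : g (stdVec _ l) - stdVec _ l =
        (2⁻¹ : ℂ) • (g (hyperbolicSum l) - hyperbolicSum l) := by
      rw [hvec, map_smul, map_add, hdiff]
      module
    exact heq ▸ smul_mem _ _ hsum
  refine isUpperTriangular_of_map_stdSub hg fun k hk => ?_
  by_cases hlt : k < l
  · exact hstd k hlt
  · obtain rfl : l = k := by omega
    have hsup : stdSub (2 * l + 1) l = span ℂ {stdVec _ l} ⊔ stdSub _ (l - 1) := by
      simpa only [Nat.sub_add_cancel hl] using stdSub_succ (n := 2 * l + 1) (k := l - 1)
    have hmem : g (stdVec _ l) ∈ stdSub (2 * l + 1) l := by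
      rw [← sub_add_cancel (g (stdVec _ l)) (stdVec _ l)]
      exact add_mem (stdSub_mono (by omega) hsub) (stdVec_mem_stdSub hl le_rfl)
    refine eq_of_le_of_finrank_eq ?_ (LinearEquiv.finrank_map_eq g _)
    conv_lhs => rw [hsup, Submodule.map_sup, hstd (l - 1) (by omega), map_span, Set.image_singleton]
    exact sup_le ((span_singleton_le_iff_mem _ _).2 hmem) (stdSub_mono (by omega))

include hcentral in
theorem det_eq_neg_one_of_apply_hyperbolicSum_add_mem
    (hsum : g (hyperbolicSum l) + hyperbolicSum l ∈ stdSub (2 * l + 1) (l - 1)) :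
    LinearMap.det g.toLinearMap = -1 := by
  have hpp := betaForm_hyperbolicSum_self hl
  set r := Module.reflection hpp
  have hrB : (betaForm _).IsOrthogonal r := isOrthogonal_reflection (betaForm_isSymm _) hpp
  have hrfix : ∀ x, betaForm _ (hyperbolicSum l) x = 0 → r x = x := fun x hx => by
    rw [Module.reflection_apply, hx, zero_smul, sub_zero]
  have hrcentral : r (stdVec _ (l + 1)) = stdVec (2 * l + 1) (l + 1) :=
    hrfix _ (((betaForm_isSymm _).eq _ _).trans betaForm_central_hyperbolicSum)
  have hrdiff : r (hyperbolicDiff l) = hyperbolicDiff l :=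
    hrfix _ (((betaForm_isSymm _).eq _ _).trans (betaForm_hyperbolicDiff_hyperbolicSum hl))
  have hrstd : ∀ j < l, (stdSub _ j).map r.toLinearMap = stdSub (2 * l + 1) j := by
    refine fun j hj => eq_of_le_of_finrank_eq ?_ (LinearEquiv.finrank_map_eq r _)
    rintro _ ⟨x, hx, rfl⟩
    rwa [LinearEquiv.coe_coe, hrfix x
      (betaForm_hyperbolicSum_of_mem_stdSub hl (stdSub_mono (by omega) hx))]
  have hrg : (betaForm _).IsOrthogonal (r.trans g) := fun x y => (hg (r x) (r y)).trans (hrB x y)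
  have hupper : IsUpperTriangular (r.trans g) := by
    refine isUpperTriangular_of_apply_hyperbolicSum_sub_mem hl hrg ?_ (fun j hj => ?_) ?_
    · rw [LinearEquiv.trans_apply, hrdiff, hdiff]
    · rw [LinearEquiv.coe_trans, Submodule.map_comp, hrstd j hj, hstd j hj]
    · rw [LinearEquiv.trans_apply, Module.reflection_apply_self, map_neg, ← neg_add']
      exact neg_mem hsum
  have hdet : LinearMap.det (r.trans g).toLinearMap = 1 :=
    hupper.det_eq_one hrg fun a ha => by
      have hal : (a : ℕ) = l := by
        have := congrArg Fin.val ha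
        rw [Fin.val_rev] at this
        omega
      rw [hal, LinearEquiv.trans_apply, hrcentral, hcentral]
  rw [LinearEquiv.coe_trans, LinearMap.det_comp, det_reflection hpp] at hdet
  linear_combination -hdet

include hcentral in
theorem isUpperTriangular_of_det_eq_one (hdet : LinearMap.det g.toLinearMap = 1) :
    IsUpperTriangular g := by
  rcases apply_hyperbolicSum_sub_or_add_mem hl hg hcentral hdiff hstd with hsub | hadd
  · exact isUpperTriangular_of_apply_hyperbolicSum_sub_mem hl hg hdiff hstd hsub
  · rw [det_eq_neg_one_of_apply_hyperbolicSum_add_mem hl hg hcentral hdiff hstd hadd] at hdet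
    norm_num at hdet

end Hyperbolic

theorem BOddSmall_eq (hl : 1 ≤ l) : BOddSmall l =
    {g | g ∈ koddSubgroup l ∧ actFlag (2 * l + 1) g (FyOddFlag l) = FyOddFlag l} := by
  ext g
  simp only [Set.mem_ofPred_eq, mem_koddSubgroup]
  constructor
  · rintro ⟨hSO, hcentral, hdiff, hupper : IsUpperTriangular g⟩
    exact ⟨⟨hSO, hcentral⟩, (actFlag_FyOddFlag_eq_iff hl ⟨hSO, hcentral⟩).2
      ⟨hdiff, fun j hj => hupper.map_stdSub (by omega)⟩⟩
  · rintro ⟨hg, hflag⟩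
    obtain ⟨hdiff, hstd⟩ := (actFlag_FyOddFlag_eq_iff hl hg).1 hflag
    exact ⟨hg.1, hg.2, hdiff,
      isUpperTriangular_of_det_eq_one hl hg.1.2 hg.2 hdiff hstd hg.1.1⟩

end Stabilizers

section Levi

open Matrix

variable {n l : ℕ} {M N : Matrix (Fin n) (Fin n) ℂ}

/-- The adjoint of `M` with respect to `β`: the transpose of `M` along the antidiagonal. -/
def revAdjoint (M : Matrix (Fin n) (Fin n) ℂ) : Matrix (Fin n) (Fin n) ℂ :=
  Mᵀ.submatrix Fin.revPerm Fin.revPerm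

theorem revAdjoint_revAdjoint (M : Matrix (Fin n) (Fin n) ℂ) :
    revAdjoint (revAdjoint M) = M := by
  ext i j
  simp [revAdjoint]

theorem det_revAdjoint (M : Matrix (Fin n) (Fin n) ℂ) : (revAdjoint M).det = M.det := by
  rw [revAdjoint, det_submatrix_equiv_self, det_transpose]

theorem betaForm_mulVec_left (M : Matrix (Fin n) (Fin n) ℂ) (x y : Fin n → ℂ) :
    betaForm n (M *ᵥ x) y = betaForm n x (revAdjoint M *ᵥ y) := by
  change (M *ᵥ x) ⬝ᵥ (y ∘ Fin.revPerm) = x ⬝ᵥ ((revAdjoint M *ᵥ y) ∘ Fin.revPerm)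
  rw [revAdjoint, submatrix_mulVec_equiv, mulVec_transpose, dotProduct_comm, dotProduct_mulVec,
    dotProduct_comm]
  congr 1
  ext i
  simp

theorem exists_mem_SOgrp_of_commute (hM : IsUnit M) (h : Commute M (revAdjoint M)) :
    ∃ g ∈ SOgrp n, ∀ x, g (revAdjoint M *ᵥ x) = M *ᵥ x := by
  have hdet : M.det ≠ 0 := ((isUnit_iff_isUnit_det M).1 hM).ne_zero
  have hM' : IsUnit (revAdjoint M) := by
    rwa [isUnit_iff_isUnit_det, det_revAdjoint, ← isUnit_iff_isUnit_det]
  have hsurj : Function.Surjective (revAdjoint M).mulVec := mulVec_surjective_iff_isUnit.2 hM'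
  let e := toLinearEquiv' M hM.nonempty_invertible.some
  let e' := toLinearEquiv' (revAdjoint M) hM'.nonempty_invertible.some
  let g := e'.symm.trans e
  have hg : ∀ x, g (revAdjoint M *ᵥ x) = M *ᵥ x := fun x =>
    congrArg e (e'.symm_apply_apply x)
  refine ⟨g, ⟨?_, fun x y => ?_⟩, hg⟩
  · have hcomp : g.toLinearMap ∘ₗ toLin' (revAdjoint M) = toLin' M :=
      LinearMap.ext hg
    have := congrArg LinearMap.det hcomp
    rwa [LinearMap.det_comp, LinearMap.det_toLin', LinearMap.det_toLin', det_revAdjoint,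
      mul_eq_right₀ hdet] at this
  · obtain ⟨x, rfl⟩ := hsurj x
    obtain ⟨y, rfl⟩ := hsurj y
    change betaForm n (g (revAdjoint M *ᵥ x)) (g (revAdjoint M *ᵥ y)) = betaForm n _ _
    rw [hg, hg, betaForm_mulVec_left, betaForm_mulVec_left, revAdjoint_revAdjoint, mulVec_mulVec,
      mulVec_mulVec, h.eq]

theorem revAdjoint_one_add (N : Matrix (Fin n) (Fin n) ℂ) :
    revAdjoint (1 + N) = 1 + revAdjoint N := by
  ext i j
  simp [revAdjoint, Matrix.one_apply]

section TopLeft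

variable (hln : 2 * l ≤ n) (hN : ∀ i j : Fin n, l ≤ i ∨ l ≤ j → N i j = 0)

include hln hN

theorem mul_revAdjoint_eq_zero : N * revAdjoint N = 0 := by
  ext i k
  rw [mul_apply]
  refine Finset.sum_eq_zero fun j _ => ?_
  by_cases hj : l ≤ j
  · rw [hN i j (.inr hj), zero_mul]
  · rw [revAdjoint, submatrix_apply, transpose_apply,
      hN _ (Fin.revPerm j) (.inr (by rw [Fin.revPerm_apply, Fin.val_rev]; omega)), mul_zero]

theorem revAdjoint_mul_eq_zero : revAdjoint N * N = 0 := by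
  ext i k
  rw [mul_apply]
  refine Finset.sum_eq_zero fun j _ => ?_
  by_cases hj : l ≤ j
  · rw [hN j k (.inl hj), mul_zero]
  · rw [revAdjoint, submatrix_apply, transpose_apply,
      hN (Fin.revPerm j) _ (.inl (by rw [Fin.revPerm_apply, Fin.val_rev]; omega)), zero_mul]

theorem commute_one_add_revAdjoint : Commute (1 + N) (revAdjoint (1 + N)) := by
  have hcomm : Commute N (revAdjoint N) :=
    (mul_revAdjoint_eq_zero hln hN).trans (revAdjoint_mul_eq_zero hln hN).symm
  rw [revAdjoint_one_add]
  exact (Commute.one_left _).add_left ((Commute.one_right _).add_right hcomm)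

omit hln in
theorem revAdjoint_one_add_mulVec {x : Fin n → ℂ} (hx : x ∈ stdSub n (n - l)) :
    revAdjoint (1 + N) *ᵥ x = x := by
  have hzero : revAdjoint N *ᵥ x = 0 := by
    ext i
    rw [mulVec, dotProduct, Pi.zero_apply]
    refine Finset.sum_eq_zero fun j _ => ?_
    by_cases hj : n - l ≤ j
    · rw [mem_stdSub.1 hx j hj, mul_zero]
    · rw [revAdjoint, submatrix_apply, transpose_apply,
        hN (Fin.revPerm j) _ (.inl (by rw [Fin.revPerm_apply, Fin.val_rev]; omega)), zero_mul]
  rw [revAdjoint_one_add, add_mulVec, one_mulVec, hzero, add_zero]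

end TopLeft

/-- The matrix `N` such that `1 + N` sends `e_j` to `w j` for `j ≤ l` and fixes `e_j` for
`l < j`. -/
def frameOffset (n l : ℕ) (w : ℕ → Fin n → ℂ) : Matrix (Fin n) (Fin n) ℂ :=
  of fun i j => if (j : ℕ) < l then (w (j + 1) - stdVec n (j + 1)) i else 0

section Frame

variable {w : ℕ → Fin n → ℂ}

theorem one_add_frameOffset_mulVec_stdVec {m : ℕ} (hm : 1 ≤ m) (hmn : m ≤ n) :
    (1 + frameOffset n l w) *ᵥ stdVec n m = if m ≤ l then w m else stdVec n m := by
  obtain ⟨j, rfl⟩ := Nat.exists_eq_add_of_le' hm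
  have hcol : frameOffset n l w *ᵥ stdVec n (j + 1) =
      if j + 1 ≤ l then w (j + 1) - stdVec n (j + 1) else 0 := by
    rw [← single_one_eq_stdVec ⟨j, hmn⟩, mulVec_single_one]
    ext i
    by_cases hj : j < l <;> simp [frameOffset, hj, single_one_eq_stdVec]
  rw [add_mulVec, one_mulVec, hcol]
  split_ifs <;> simp

theorem frameOffset_apply_eq_zero (hw : ∀ m, 1 ≤ m → m ≤ l → w m ∈ stdSub n l) (i j : Fin n)
    (hij : l ≤ i ∨ l ≤ j) : frameOffset n l w i j = 0 := by
  rw [frameOffset, of_apply]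
  split_ifs with hj
  · exact mem_stdSub.1 (sub_mem (hw _ (by omega) hj) (stdVec_mem_stdSub (by omega) hj)) i
      (hij.resolve_right (by omega))
  · rfl

theorem isUnit_one_add_frameOffset (hln : l ≤ n) (hw : span ℂ (w '' Set.Icc 1 l) = stdSub n l) :
    IsUnit (1 + frameOffset n l w) := by
  set M := 1 + frameOffset n l w
  have hmem : ∀ m, 1 ≤ m → m ≤ n → stdVec n m ∈ LinearMap.range M.mulVecLin := by
    intro m hm hmn
    by_cases hml : m ≤ l
    · have hle : stdSub n l ≤ LinearMap.range M.mulVecLin := by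
        rw [← hw, span_le]
        rintro _ ⟨j, ⟨hj, hjl⟩, rfl⟩
        exact ⟨stdVec n j, by
          rw [mulVecLin_apply, one_add_frameOffset_mulVec_stdVec hj (hjl.trans hln), if_pos hjl]⟩
      exact hle (stdVec_mem_stdSub hm hml)
    · exact ⟨stdVec n m, by
        rw [mulVecLin_apply, one_add_frameOffset_mulVec_stdVec hm hmn, if_neg hml]⟩
  have htop : LinearMap.range M.mulVecLin = ⊤ := by
    rw [eq_top_iff, ← stdSub_self, stdSub, span_le]
    rintro _ ⟨m, ⟨hm, hmn⟩, rfl⟩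
    exact hmem m hm hmn
  exact mulVec_surjective_iff_isUnit.1 (LinearMap.range_eq_top.1 htop)

theorem exists_mem_SOgrp_map_stdSub_eq (hln : 2 * l ≤ n) {V : ℕ → Submodule ℂ (Fin n → ℂ)}
    (hV : Monotone V) (hfr : ∀ i ≤ l, finrank ℂ (V i) = i) (hVl : V l = stdSub n l) :
    ∃ g ∈ SOgrp n, (∀ m, l < m → m ≤ n - l → g (stdVec n m) = stdVec n m) ∧
      ∀ i ≤ l, (stdSub n i).map g.toLinearMap = V i := by
  obtain ⟨w, hw⟩ := exists_span_image_Icc_eq hV hfr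
  have hwl : span ℂ (w '' Set.Icc 1 l) = stdSub n l := (hw l le_rfl).trans hVl
  have hN := frameOffset_apply_eq_zero (n := n) fun m hm hml =>
    hwl.le (subset_span (Set.mem_image_of_mem w ⟨hm, hml⟩))
  obtain ⟨g, hg, hgM⟩ := exists_mem_SOgrp_of_commute
    (isUnit_one_add_frameOffset (by omega) hwl) (commute_one_add_revAdjoint hln hN)
  have hgvec : ∀ m, 1 ≤ m → m ≤ n - l →
      g (stdVec n m) = if m ≤ l then w m else stdVec n m := fun m hm hmn => by
    rw [← one_add_frameOffset_mulVec_stdVec hm (by omega), ← hgM,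
      revAdjoint_one_add_mulVec hN (stdVec_mem_stdSub hm hmn)]
  refine ⟨g, hg, fun m hlm hm => ?_, fun i hi => ?_⟩
  · rw [hgvec m (by omega) hm, if_neg (by omega)]
  · rw [stdSub, map_span, ← hw i hi, Set.image_image]
    congr 1
    refine Set.image_congr fun m hm => ?_
    rw [LinearEquiv.coe_coe, hgvec m hm.1 (by have := hm.2; omega), if_pos (hm.2.trans hi)]

end Frame

end Levi

section Transitivity

variable {l : ℕ} {W : ℕ → Submodule ℂ (Fin (2 * l + 1) → ℂ)}

theorem InXW.monotone (hW : InXW l W) : Monotone W := monotone_nat_of_le_succ hW.1.2.1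

theorem InXW.inf_orthogonal_stdSub_le (hW : InXW l W) :
    W l ⊓ (betaForm _).orthogonal (stdSub (2 * l + 1) l) ≤ stdSub (2 * l + 1) l := by
  rintro x ⟨hxW, hx⟩
  rw [orthogonal_stdSub (by omega)] at hx
  have hcentral : x ⟨l, by omega⟩ = 0 := by
    rw [← betaForm_central_left x, ← (betaForm_isSymm _).eq]
    exact hW.2.1 x hxW
  refine mem_stdSub.2 fun i hi => ?_
  rcases eq_or_lt_of_le hi with h | h
  · rwa [show i = ⟨l, by omega⟩ from Fin.ext h.symm]
  · exact mem_stdSub.1 hx i (by omega)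

theorem InXW.exists_mem_Kodd_map_stdSub_eq (hW : InXW l W) :
    ∃ g ∈ Kodd l, (stdSub (2 * l + 1) l).map g.toLinearMap = W l := by
  have hfrU : finrank ℂ (stdSub (2 * l + 1) l) = l := finrank_stdSub (by omega)
  have hfrW : finrank ℂ (W l) = l := hW.1.1 l le_rfl
  obtain ⟨d, hd⟩ := Nat.exists_eq_add_of_le
    (finrank_mono (inf_le_right : W l ⊓ stdSub (2 * l + 1) l ≤ _))
  have heven : Even d := by
    have := hW.2.2
    rw [hfrU] at hd
    rw [Nat.even_iff]
    omega
  obtain ⟨g, hg, hgW, hgdet, hgfix⟩ := exists_isOrthogonal_map_eq_of_isotropic (betaForm_isSymm _)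
    (stdSub_le_orthogonal_self (by omega)) (fun x hx y hy => hW.1.2.2.2 y hy x hx)
    hW.inf_orthogonal_stdSub_le (hfrW.trans hfrU.symm) hd.symm
  refine ⟨g, ⟨⟨by rw [hgdet, heven.neg_one_pow], hg⟩, hgfix _ ?_⟩, hgW⟩
  rw [LinearMap.BilinForm.mem_orthogonal_iff]
  have hle : stdSub (2 * l + 1) l ⊔ W l ≤
      LinearMap.ker (betaForm _ (stdVec (2 * l + 1) (l + 1))) :=
    sup_le (stdSub_le_ker_betaForm_central le_rfl) fun x hx =>
      ((betaForm_isSymm _).eq _ _).trans (hW.2.1 x hx)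
  exact fun x hx => ((betaForm_isSymm _).eq _ _).trans (hle hx)

theorem InXW.exists_mem_koddSubgroup_actFlag_eq (hW : InXW l W) :
    ∃ g ∈ koddSubgroup l, actFlag (2 * l + 1) g (EOddFlag l) = W := by
  obtain ⟨g, hg, hgW⟩ := hW.exists_mem_Kodd_map_stdSub_eq
  have hmapl : (W l).map g.symm.toLinearMap = stdSub (2 * l + 1) l := by
    rw [← hgW, map_symm_eq_iff]
  obtain ⟨h, hh, hhfix, hhstd⟩ := exists_mem_SOgrp_map_stdSub_eq (by omega)
    (fun i j hij => map_mono (f := g.symm.toLinearMap) (hW.monotone hij))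
    (fun i hi => (LinearEquiv.finrank_map_eq g.symm (W i)).trans (hW.1.1 i hi)) hmapl
  have hhK : h ∈ Kodd l := ⟨hh, hhfix (l + 1) (by omega) (by omega)⟩
  refine ⟨g * h, mul_mem (mem_koddSubgroup.2 hg) (mem_koddSubgroup.2 hhK), funext fun k => ?_⟩
  have hWk : W k = W (min k l) := by
    rcases le_total k l with hk | hk
    · rw [min_eq_left hk]
    · rw [min_eq_right hk, hW.1.2.2.1 k hk]
  change (stdSub (2 * l + 1) (min k l)).map (h.trans g).toLinearMap = W k
  rw [LinearEquiv.coe_trans, Submodule.map_comp, hhstd _ (min_le_right k l), hWk,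
    ← map_symm_eq_iff]

end Transitivity

/-- `B_{2l}·(k·F'_y) = B_{2l}·(k'·F'_y)` iff `B_{2l-1}·(k⁻¹·E_0) = B_{2l-1}·(k'⁻¹·E_0)`,
and every `B_{2l-1}`-orbit on `X_W` arises as some `B_{2l-1}·(k⁻¹·E_0)`; hence
`B_{2l}·(k·F'_y) ↦ B_{2l-1}·(k⁻¹·E_0)` is a well-defined bijection from the
`B_{2l}`-orbits on `K·F'_y` onto the `B_{2l-1}`-orbits on `X_W`. -/
theorem stmt_10 (l : ℕ) (hl : 2 ≤ l) :
    (∀ a ∈ Kodd l, ∀ a' ∈ Kodd l,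
      (orbitOf (2 * l + 1) (BOddFull l) (actFlag (2 * l + 1) a (FyOddFlag l)) =
          orbitOf (2 * l + 1) (BOddFull l) (actFlag (2 * l + 1) a' (FyOddFlag l)) ↔
        orbitOf (2 * l + 1) (BOddSmall l) (actFlag (2 * l + 1) a.symm (EOddFlag l)) =
          orbitOf (2 * l + 1) (BOddSmall l) (actFlag (2 * l + 1) a'.symm (EOddFlag l)))) ∧
    (∀ W, InXW l W →
      ∃ a ∈ Kodd l,
        orbitOf (2 * l + 1) (BOddSmall l) (actFlag (2 * l + 1) a.symm (EOddFlag l)) =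
          orbitOf (2 * l + 1) (BOddSmall l) W) := by
  rw [BOddFull_eq l, BOddSmall_eq (by omega : 1 ≤ l)]
  constructor
  · intro a ha a' ha'
    exact orbitOf_stabilizer_actFlag_eq_iff _ _ (mem_koddSubgroup.2 ha) (mem_koddSubgroup.2 ha')
  · intro W hW
    obtain ⟨g, hg, rfl⟩ := hW.exists_mem_koddSubgroup_actFlag_eq
    exact ⟨g⁻¹, mem_koddSubgroup.1 (inv_mem hg), rfl⟩
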